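/- arXiv:2406.05585 — 4 statements merged into one kernel-verified Lean document; each statement's English description precedes it below -/
import Mathlib

section
/- Let G be a connected simple graph on a finite nonempty linearly ordered vertex type V with oriented incidence matrix D. Then the rank of D, viewed as a matrix over ℚ, equals |V| − 1. -/
open SimpleGraph Matrix

/-- The oriented incidence matrix of a simple graph on a linearly ordered vertex type:
the column of an edge with endpoints `a < b` has `+1` in row `b`, `-1` in row `a`,
and `0` elsewhere. -/
def orientedIncMat {V : Type*} [LinearOrder V] (G : SimpleGraph V) :
    Matrix V G.edgeSet ℤ := fun v e =>
  (if v = (e : Sym2 V).sup then 1 else 0) - (if v = (e : Sym2 V).inf then 1 else 0)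

theorem transpose_orientedIncMat_mulVec_apply {V : Type*} [Fintype V] [LinearOrder V]
    (G : SimpleGraph V) (x : V → ℚ) (e : G.edgeSet) :
    (((orientedIncMat G).map ((↑) : ℤ → ℚ))ᵀ *ᵥ x) e =
      x (e : Sym2 V).sup - x (e : Sym2 V).inf := by
  simp [mulVec, dotProduct, orientedIncMat, sub_mul, Finset.sum_sub_distrib]

theorem transpose_orientedIncMat_mulVec_eq_zero_iff_forall_adj {V : Type*} [Fintype V]
    [LinearOrder V] (G : SimpleGraph V) (x : V → ℚ) :
    ((orientedIncMat G).map ((↑) : ℤ → ℚ))ᵀ *ᵥ x = 0 ↔ ∀ i j, G.Adj i j → x i = x j := by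
  simp only [funext_iff, transpose_orientedIncMat_mulVec_apply, Pi.zero_apply, sub_eq_zero]
  constructor
  · intro h i j hij
    have := h ⟨s(i, j), hij⟩
    rcases le_total i j with hle | hle <;> simp_all
  · rintro h ⟨e, he⟩
    induction e with
    | h i j =>
      have := h i j he
      rcases le_total i j with hle | hle <;> simp_all

theorem ker_transpose_orientedIncMat {V : Type*} [Fintype V] [LinearOrder V]
    (G : SimpleGraph V) (hG : G.Connected) :
    LinearMap.ker ((orientedIncMat G).map ((↑) : ℤ → ℚ))ᵀ.mulVecLin =
      Submodule.span ℚ {(1 : V → ℚ)} := by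
  ext x
  rw [LinearMap.mem_ker, mulVecLin_apply,
    transpose_orientedIncMat_mulVec_eq_zero_iff_forall_adj, Submodule.mem_span_singleton]
  constructor
  · intro h
    obtain ⟨v⟩ := hG.nonempty
    refine ⟨x v, funext fun w => ?_⟩
    obtain ⟨p⟩ := hG.preconnected v w
    have hp : x v = x w := by
      induction p with
      | nil => rfl
      | cons hadj _ ih => exact (h _ _ hadj).trans ih
    simp [hp]
  · rintro ⟨a, rfl⟩ i j -
    rfl

theorem rank_orientedIncMat {V : Type*} [Fintype V] [Nonempty V] [LinearOrder V]
    (G : SimpleGraph V) [DecidableRel G.Adj] (hG : G.Connected) :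
    ((orientedIncMat G).map ((↑) : ℤ → ℚ)).rank = Fintype.card V - 1 := by
  have h := LinearMap.finrank_range_add_finrank_ker
    ((orientedIncMat G).map ((↑) : ℤ → ℚ))ᵀ.mulVecLin
  rw [ker_transpose_orientedIncMat G hG, finrank_span_singleton one_ne_zero,
    Module.finrank_fintype_fun_eq_card] at h
  rw [← rank_transpose, Matrix.rank, ← h, Nat.add_sub_cancel]
end

section
/- Let G be a connected simple graph on a finite nonempty linearly ordered vertex type V with oriented incidence matrix D, let T be a spanning tree of G, and let e be an edge of G not in T. Then there exists a unique integer 1-chain c such that D·c = 0, the coefficient of c on e equals 1, and the coefficient of c on every edge that is neither in T nor equal to e is 0. -/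
open SimpleGraph Matrix

theorem Sym2.mk_inf_sup {V : Type*} [LinearOrder V] (g : Sym2 V) : s(g.inf, g.sup) = g := by
  induction g with
  | _ a b => rcases le_total a b with h | h <;> simp [h, Sym2.eq_swap]

theorem orientedIncMat_mulVec_single {V : Type*} [LinearOrder V] {G : SimpleGraph V}
    [Fintype G.edgeSet] (e : G.edgeSet) :
    orientedIncMat G *ᵥ Pi.single e 1 =
      Pi.single (e : Sym2 V).sup 1 - Pi.single (e : Sym2 V).inf 1 := by
  ext v
  simp [orientedIncMat, Pi.single_apply]

theorem vecMul_orientedIncMat {V : Type*} [Fintype V] [LinearOrder V] {G : SimpleGraph V}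
    (y : V → ℤ) (e : G.edgeSet) :
    (y ᵥ* orientedIncMat G) e = y (e : Sym2 V).sup - y (e : Sym2 V).inf := by
  simp [orientedIncMat, vecMul, dotProduct, mul_sub]

/-- For every walk of `T` there is a chain of `G`, supported on the edges of `T`, whose boundary
is the difference of the endpoints of the walk. -/
theorem SimpleGraph.Walk.exists_chain_boundary {V : Type*} [LinearOrder V] {G T : SimpleGraph V}
    [Fintype G.edgeSet] (hTG : T ≤ G) {u v : V} (p : T.Walk u v) :
    ∃ x : G.edgeSet → ℤ, orientedIncMat G *ᵥ x = Pi.single v 1 - Pi.single u 1 ∧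
      ∀ f : G.edgeSet, (f : Sym2 V) ∉ T.edgeSet → x f = 0 := by
  induction p with
  | nil => exact ⟨0, by simp, by simp⟩
  | @cons a b c h p ih =>
    obtain ⟨x, hx, hxT⟩ := ih
    let g : G.edgeSet := ⟨s(a, b), hTG h⟩
    have hg : ∀ f : G.edgeSet, (f : Sym2 V) ∉ T.edgeSet → f ≠ g := by
      rintro f hf rfl
      exact hf h
    have hD := orientedIncMat_mulVec_single g
    rcases le_total a b with hab | hab
    · refine ⟨x + Pi.single g 1, ?_, fun f hf => by simp [hxT f hf, hg f hf]⟩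
      rw [mulVec_add, hx, hD]
      simp [g, hab]
    · refine ⟨x - Pi.single g 1, ?_, fun f hf => by simp [hxT f hf, hg f hf]⟩
      rw [mulVec_sub, hx, hD]
      simp [g, hab]

/-- A cycle supported on the edges of a forest vanishes. -/
theorem SimpleGraph.IsAcyclic.eq_zero_of_orientedIncMat_mulVec_eq_zero {V : Type*} [Fintype V]
    [LinearOrder V] {G T : SimpleGraph V} [Fintype G.edgeSet] (hT : T.IsAcyclic)
    {d : G.edgeSet → ℤ} (hd : orientedIncMat G *ᵥ d = 0)
    (hdT : ∀ f : G.edgeSet, (f : Sym2 V) ∉ T.edgeSet → d f = 0) : d = 0 := by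
  classical
  ext f
  by_contra hf
  have hfT : (f : Sym2 V) ∈ T.edgeSet := by
    by_contra h
    exact hf (hdT f h)
  set T' := T.deleteEdges {(f : Sym2 V)}
  let y : V → ℤ := fun v => if T'.Reachable (f : Sym2 V).inf v then 1 else 0
  have hy : y ⬝ᵥ (orientedIncMat G *ᵥ d) = 0 := by simp [hd]
  rw [dotProduct_mulVec, dotProduct, Finset.sum_eq_single f] at hy
  · have hbridge : ¬ T'.Reachable (f : Sym2 V).inf (f : Sym2 V).sup := by
      have h := isAcyclic_iff_forall_isBridge.1 hT hfT
      rwa [← Sym2.mk_inf_sup (f : Sym2 V), isBridge_iff, Sym2.mk_inf_sup] at h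
    rw [vecMul_orientedIncMat] at hy
    exact hf (by simpa [y, hbridge] using hy)
  · intro g _ hgf
    by_cases hgT : (g : Sym2 V) ∈ T.edgeSet
    · have hadj : T'.Adj (g : Sym2 V).inf (g : Sym2 V).sup := by
        rw [← mem_edgeSet, Sym2.mk_inf_sup]
        simp [T', hgT, Subtype.coe_inj, hgf]
      have hiff : T'.Reachable (f : Sym2 V).inf (g : Sym2 V).sup ↔
          T'.Reachable (f : Sym2 V).inf (g : Sym2 V).inf :=
        ⟨fun h => h.trans hadj.symm.reachable, fun h => h.trans hadj.reachable⟩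
      simp [vecMul_orientedIncMat, y, hiff]
    · simp [hdT g hgT]
  · simp

theorem existsUnique_fundamental_cycle {V : Type*} [Fintype V] [Nonempty V] [LinearOrder V]
    (G T : SimpleGraph V) [DecidableRel G.Adj] (hG : G.Connected)
    (hTG : T ≤ G) (hT : T.IsTree) (e : G.edgeSet) (he : (e : Sym2 V) ∉ T.edgeSet) :
    ∃! c : G.edgeSet → ℤ, orientedIncMat G *ᵥ c = 0 ∧ c e = 1 ∧
      ∀ f : G.edgeSet, (f : Sym2 V) ∉ T.edgeSet → f ≠ e → c f = 0 := by
  obtain ⟨p⟩ := hT.1.preconnected (e : Sym2 V).inf (e : Sym2 V).sup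
  obtain ⟨x, hx, hxT⟩ := p.exists_chain_boundary hTG
  refine ⟨Pi.single e 1 - x, ⟨?_, by simp [hxT e he], fun f hf hfe => by simp [hxT f hf, hfe]⟩, ?_⟩
  · rw [mulVec_sub, hx, orientedIncMat_mulVec_single, sub_self]
  · rintro c ⟨hc, hce, hcT⟩
    refine sub_eq_zero.1 (hT.2.eq_zero_of_orientedIncMat_mulVec_eq_zero (G := G) ?_ fun f hf => ?_)
    · rw [mulVec_sub, mulVec_sub, hc, hx, orientedIncMat_mulVec_single, sub_self, sub_zero]
    · by_cases hfe : f = e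
      · subst hfe
        simp [hce, hxT f hf]
      · simp [hcT f hf hfe, hxT f hf, hfe]
end

section
/- Let G be a connected simple graph on a finite nonempty linearly ordered vertex type V with edge set E and oriented incidence matrix D. For any subset S of E with |S| < |E| − |V| + 1, the restriction map sending a cycle to its values on the edges in S is not injective on ker D: there exist two distinct cycles of G that agree on every edge of S. -/
open SimpleGraph Matrix

theorem sum_orientedIncMat_apply {V : Type*} [Fintype V] [LinearOrder V]
    (G : SimpleGraph V) (e : G.edgeSet) : ∑ v, orientedIncMat G v e = 0 := by
  simp [orientedIncMat, Finset.sum_sub_distrib]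

theorem sum_orientedIncMat_mulVec {V : Type*} [Fintype V] [LinearOrder V]
    (G : SimpleGraph V) [Fintype G.edgeSet] (c : G.edgeSet → ℤ) :
    ∑ v, (orientedIncMat G *ᵥ c) v = 0 := by
  simp only [mulVec, dotProduct]
  rw [Finset.sum_comm]
  simp [← Finset.sum_mul, sum_orientedIncMat_apply]

/-- If the entries of `A *ᵥ c` always sum to zero, then one of the equations `A *ᵥ c = 0` is redundant,
so a nonzero solution vanishing on a small set of coordinates exists. -/
theorem exists_ne_zero_mulVec_eq_zero_of_sum_eq_zero {R m n : Type*} [CommRing R] [Nontrivial R]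
    [Fintype m] [Nonempty m] [Fintype n] (A : Matrix m n R)
    (hA : ∀ c, ∑ i, (A *ᵥ c) i = 0) (S : Finset n)
    (hS : S.card + Fintype.card m < Fintype.card n + 1) :
    ∃ c : n → R, c ≠ 0 ∧ A *ᵥ c = 0 ∧ ∀ j ∈ S, c j = 0 := by
  classical
  obtain ⟨i₀⟩ := ‹Nonempty m›
  let L : (n → R) →ₗ[R] ({i // i ≠ i₀} → R) × (S → R) :=
    (LinearMap.funLeft R R Subtype.val ∘ₗ A.mulVecLin).prod (LinearMap.funLeft R R Subtype.val)
  have hL : ¬ Function.Injective L := fun h => by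
    have hle := LinearMap.finrank_le_finrank_of_injective h
    have hpos : 0 < Fintype.card m := Fintype.card_pos_iff.mpr ⟨i₀⟩
    simp only [Module.finrank_prod, Module.finrank_fintype_fun_eq_card, Fintype.card_coe,
      Fintype.card_subtype_compl, Fintype.card_subtype_eq, ne_eq] at hle
    omega
  rw [injective_iff_map_eq_zero] at hL
  push Not at hL
  obtain ⟨c, hLc, hc⟩ := hL
  have hrow : ∀ i, i ≠ i₀ → (A *ᵥ c) i = 0 := fun i hi =>
    congrFun (congrArg Prod.fst hLc) ⟨i, hi⟩
  refine ⟨c, hc, funext fun i => ?_, fun j hj => congrFun (congrArg Prod.snd hLc) ⟨j, hj⟩⟩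
  by_cases hi : i = i₀
  · subst hi
    exact (Fintype.sum_eq_single i hrow).symm.trans (hA c)
  · exact hrow i hi

theorem not_injective_restriction_of_small {V : Type*} [Fintype V] [Nonempty V]
    [LinearOrder V] (G : SimpleGraph V) [DecidableRel G.Adj] (hG : G.Connected)
    (S : Finset G.edgeSet)
    (hS : S.card + Fintype.card V < Fintype.card G.edgeSet + 1) :
    ∃ c₁ c₂ : G.edgeSet → ℤ, orientedIncMat G *ᵥ c₁ = 0 ∧ orientedIncMat G *ᵥ c₂ = 0 ∧
      c₁ ≠ c₂ ∧ ∀ e ∈ S, c₁ e = c₂ e := by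
  obtain ⟨c, hc, hcycle, hcS⟩ := exists_ne_zero_mulVec_eq_zero_of_sum_eq_zero
    (orientedIncMat G) (sum_orientedIncMat_mulVec G) S hS
  exact ⟨c, 0, hcycle, mulVec_zero _, hc, hcS⟩
end

section
/- Let G be a simple graph on a finite nonempty linearly ordered vertex type V that is a tree (connected and acyclic). Then any two walks in G from a vertex u to a vertex v have the same signed chain. -/
open SimpleGraph Matrix

/-- The signed 1-chain of a single step of a walk: `+1` on the traversed edge if it is
traversed from smaller to larger endpoint, `-1` if traversed the other way. -/
def stepChain {V : Type*} [LinearOrder V] (G : SimpleGraph V) {a b : V} (_h : G.Adj a b) :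
    G.edgeSet → ℤ := fun e =>
  if (e : Sym2 V) = s(a, b) then (if a < b then 1 else -1) else 0

/-- The signed 1-chain of a walk: for each edge, the number of forward traversals minus
the number of backward traversals. -/
def walkChain {V : Type*} [LinearOrder V] {G : SimpleGraph V} :
    ∀ {u v : V}, G.Walk u v → (G.edgeSet → ℤ)
  | _, _, .nil => 0
  | _, _, .cons h p => stepChain _ h + walkChain p

theorem stepChain_add_stepChain_symm {V : Type*} [LinearOrder V] {G : SimpleGraph V} {a b : V}
    (h : G.Adj a b) : stepChain G h + stepChain G h.symm = 0 := by
  funext e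
  simp only [stepChain, Pi.add_apply, Pi.zero_apply, Sym2.eq_swap (a := b) (b := a)]
  rcases lt_or_gt_of_ne h.ne with hab | hab <;> simp [hab, hab.not_gt] <;> split_ifs <;> rfl

theorem walkChain_append {V : Type*} [LinearOrder V] {G : SimpleGraph V} {u v w : V}
    (p : G.Walk u v) (q : G.Walk v w) : walkChain (p.append q) = walkChain p + walkChain q := by
  induction p with
  | nil => simp [walkChain]
  | cons h p ih => simp [walkChain, ih, add_assoc]

/-- In an acyclic graph, removing the loops of a walk does not change its signed chain. -/
theorem walkChain_bypass {V : Type*} [LinearOrder V] {G : SimpleGraph V} (hG : G.IsAcyclic)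
    {u v : V} (p : G.Walk u v) : walkChain p.bypass = walkChain p := by
  induction p with
  | nil => rfl
  | @cons u v w h p ih =>
    rw [Walk.bypass]
    split_ifs with hu
    · have htake : p.bypass.takeUntil u hu = h.symm.toWalk :=
        congrArg Subtype.val <| (hG.subsingleton_path _ _).elim ⟨_, p.bypass_isPath.takeUntil hu⟩
          (Path.singleton h.symm)
      have hsplit := walkChain_append (p.bypass.takeUntil u hu) (p.bypass.dropUntil u hu)
      rw [Walk.take_spec, ih, htake] at hsplit
      simp only [walkChain, add_zero] at hsplit ⊢
      rw [hsplit, ← add_assoc, stepChain_add_stepChain_symm, zero_add]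
    · simp [walkChain, ih]

theorem walkChain_eq_of_isTree {V : Type*} [Fintype V] [Nonempty V] [LinearOrder V]
    (G : SimpleGraph V) (hG : G.IsTree) {u v : V} (p q : G.Walk u v) :
    walkChain p = walkChain q := by
  rw [← walkChain_bypass hG.isAcyclic p, ← walkChain_bypass hG.isAcyclic q]
  exact congrArg (fun r : G.Path u v => walkChain r.val) <|
    (hG.isAcyclic.subsingleton_path u v).elim ⟨_, p.bypass_isPath⟩ ⟨_, q.bypass_isPath⟩
end
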